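/- arXiv:1506.06253 — 2 statements merged into one kernel-verified Lean document; each statement's English description precedes it below -/
import Mathlib

section
/- Assume O is not the midpoint of any side of ABC (so H is not a vertex) and that O does not lie on the line AH. Let S₁ be the second point of intersection of the line AH with the circumconic C̃_O, and let T₁ be the reflection of A through O (the second intersection of line AO with C̃_O). Then the line S₁T₁ is parallel to BC. -/
noncomputable section

/-- The real affine plane. -/
abbrev Pt : Type := ℝ × ℝ

/-- `u` and `v` are parallel vectors (the zero vector is parallel to everything). -/
def Par (u v : Pt) : Prop := ∃ t : ℝ, u = t • v ∨ v = t • u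

/-- The centroid of the triangle `ABC`. -/
def cent (A B C : Pt) : Pt := (3⁻¹ : ℝ) • (A + B + C)

/-- The homothety with center `Z` and ratio `r`. -/
def homoth (Z : Pt) (r : ℝ) (X : Pt) : Pt := Z + r • (X - Z)

/-- The value at `p` of the quadratic polynomial with coefficient vector `c`. -/
def qval (c : Fin 6 → ℝ) (p : Pt) : ℝ :=
  c 0 * p.1 ^ 2 + c 1 * p.1 * p.2 + c 2 * p.2 ^ 2 + c 3 * p.1 + c 4 * p.2 + c 5

/-- `S` is a conic: the zero locus of a real polynomial of total degree 2. -/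
def IsConic (S : Set Pt) : Prop :=
  ∃ c : Fin 6 → ℝ, ¬(c 0 = 0 ∧ c 1 = 0 ∧ c 2 = 0) ∧ S = {p | qval c p = 0}

/-- `Z` is a center of symmetry of `S`. -/
def IsCenterOf (Z : Pt) (S : Set Pt) : Prop :=
  ∀ p ∈ S, (2 : ℝ) • Z - p ∈ S

/-- The gradient at `p` of the quadratic polynomial with coefficients `c`. -/
def qgrad (c : Fin 6 → ℝ) (p : Pt) : Pt :=
  (2 * c 0 * p.1 + c 1 * p.2 + c 3, c 1 * p.1 + 2 * c 2 * p.2 + c 4)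

/-- The line through `X` and `Y`. -/
def lineThru (X Y : Pt) : Set Pt := {p | ∃ t : ℝ, p = X + t • (Y - X)}

/-- `L` is the tangent line at the nonsingular point `p` of the conic with coefficients `c`. -/
def IsTangentLineAt (c : Fin 6 → ℝ) (L : Set Pt) (p : Pt) : Prop :=
  qval c p = 0 ∧ qgrad c p ≠ 0 ∧
  L = {q | (qgrad c p).1 * (q.1 - p.1) + (qgrad c p).2 * (q.2 - p.2) = 0}

/-!
Write `n = D₀ - O`, where `D₀` is the midpoint of `BC`. The line `AH` is parallel to `QD`, hence to
`n`. In a conic with center `O`, every chord is conjugate to the direction joining its midpoint to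
`O`. Applied to the chord `BC`, this says that `BC` is conjugate to `n`; applied to the chord `AS₁`,
whose direction is `n`, it says that `S₁T₁`, which is twice the vector from the midpoint of `AS₁`
to `O`, is conjugate to `n` as well. In the plane, the directions conjugate to `n` form a single
line, unless `n` is conjugate to everything.

In that exceptional case the conic is a pair of parallel lines of direction `n`. Then `D₀ = O + n`
lies midway between them, so `B` and `C` are on different lines and `n` is parallel to `AB` or `AC`.
Say it is `AB`; then `E₀ - O = n - (B - A) / 2` has this direction too, so that `QD` and `QE` are
both parallel to `AB`. In barycentric coordinates this means `xy + yz + zx = y² = x²`, which is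
impossible.
-/

theorem par_iff_exists_smul_smul {u v : Pt} :
    Par u v ↔ ∃ (w : Pt) (a b : ℝ), u = a • w ∧ v = b • w := by
  constructor
  · rintro ⟨t, rfl | rfl⟩
    · exact ⟨v, t, 1, rfl, (one_smul ℝ v).symm⟩
    · exact ⟨u, 1, t, (one_smul ℝ u).symm, rfl⟩
  · rintro ⟨w, a, b, rfl, rfl⟩
    by_cases hb : b = 0
    · exact ⟨0, Or.inr (by rw [hb, zero_smul, zero_smul])⟩
    · exact ⟨a / b, Or.inl (by rw [smul_smul, div_mul_cancel₀ a hb])⟩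

namespace Par

variable {u v w : Pt}

theorem symm (h : Par u v) : Par v u :=
  h.imp fun _ => Or.symm

theorem exists_eq_smul (h : Par u v) (hv : v ≠ 0) : ∃ t : ℝ, u = t • v := by
  obtain ⟨t, rfl | rfl⟩ := h
  · exact ⟨t, rfl⟩
  · exact ⟨t⁻¹, (inv_smul_smul₀ (smul_ne_zero_iff.1 hv).1 u).symm⟩

theorem trans (huv : Par u v) (hvw : Par v w) (hv : v ≠ 0) : Par u w := by
  obtain ⟨a, rfl⟩ := huv.exists_eq_smul hv
  obtain ⟨b, rfl⟩ := hvw.symm.exists_eq_smul hv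
  exact par_iff_exists_smul_smul.2 ⟨v, a, b, rfl, rfl⟩

theorem smul_left (h : Par u v) (t : ℝ) : Par (t • u) v := by
  obtain ⟨w, a, b, rfl, rfl⟩ := par_iff_exists_smul_smul.1 h
  exact par_iff_exists_smul_smul.2 ⟨w, t * a, b, smul_smul t a w, rfl⟩

theorem sub_smul_left (h : Par u v) (t : ℝ) : Par (u - t • v) v := by
  obtain ⟨w, a, b, rfl, rfl⟩ := par_iff_exists_smul_smul.1 h
  exact par_iff_exists_smul_smul.2 ⟨w, a - t * b, b, by module, rfl⟩

end Par

theorem collinear_iff_par {X Y Z : Pt} : Collinear ℝ {X, Y, Z} ↔ Par (Y - X) (Z - X) := by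
  rw [collinear_iff_of_mem (p₀ := X) (by simp), par_iff_exists_smul_smul]
  simp [sub_eq_iff_eq_add]

theorem coeff_eq_zero_of_par {u v : Pt} (huv : ¬Par u v) {a b : ℝ}
    (h : Par (a • u + b • v) u) : b = 0 := by
  by_contra hb
  have hbv : Par (b • v) u := by simpa using h.sub_smul_left a
  exact huv (by simpa [smul_smul, hb] using (hbv.smul_left b⁻¹).symm)

theorem par_of_map_eq_zero {f : Module.Dual ℝ Pt} (hf : f ≠ 0) {u v : Pt} (hu : f u = 0)
    (hv : f v = 0) : Par u v := by
  have hdim : Module.finrank ℝ f.ker ≤ 1 := by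
    have h := Module.Dual.finrank_ker_add_one_of_ne_zero hf
    have h₂ : Module.finrank ℝ Pt = 2 := by simp
    omega
  obtain ⟨w, hw⟩ := finrank_le_one_iff.1 hdim
  obtain ⟨a, ha⟩ := hw ⟨u, hu⟩
  obtain ⟨b, hb⟩ := hw ⟨v, hv⟩
  exact par_iff_exists_smul_smul.2
    ⟨w, a, b, (congrArg Subtype.val ha).symm, (congrArg Subtype.val hb).symm⟩

theorem par_of_bilinForm_eq_zero {b : LinearMap.BilinForm ℝ Pt} (hb : b ≠ 0) {u v : Pt}
    (hu : b u = 0) (hv : b v = 0) : Par u v := by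
  obtain ⟨w, hw⟩ : ∃ w, b.flip w ≠ 0 := by
    contrapose! hb
    exact LinearMap.ext₂ fun u w => DFunLike.congr_fun (hb w) u
  exact par_of_map_eq_zero hw (DFunLike.congr_fun hu w) (DFunLike.congr_fun hv w)

theorem par_or_par_of_bilinForm_apply_eq_zero {b : LinearMap.BilinForm ℝ Pt}
    (hsymm : b.IsSymm) (hb : b ≠ 0) {n u v : Pt} (hn : b n = 0) (huv : b u v = 0) :
    Par n u ∨ Par n v := by
  by_cases hu : b u = 0
  · exact Or.inl (par_of_bilinForm_eq_zero hb hn hu)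
  · exact Or.inr (par_of_map_eq_zero hu (by rw [hsymm.eq, hn, LinearMap.zero_apply]) huv)

/-- The polar form of the quadratic part of the polynomial with coefficients `c`, so that
`polarForm c u u` is twice the value at `u` of this quadratic part. Two directions are conjugate
with respect to the conic when the form vanishes on them. -/
def polarForm (c : Fin 6 → ℝ) : LinearMap.BilinForm ℝ Pt :=
  LinearMap.mk₂ ℝ
    (fun u v => 2 * c 0 * u.1 * v.1 + c 1 * (u.1 * v.2 + u.2 * v.1) + 2 * c 2 * u.2 * v.2)
    (fun _ _ _ => by simp only [Prod.fst_add, Prod.snd_add]; ring)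
    (fun _ _ _ => by simp only [Prod.smul_fst, Prod.smul_snd, smul_eq_mul]; ring)
    (fun _ _ _ => by simp only [Prod.fst_add, Prod.snd_add]; ring)
    (fun _ _ _ => by simp only [Prod.smul_fst, Prod.smul_snd, smul_eq_mul]; ring)

section Conic

theorem polarForm_apply (c : Fin 6 → ℝ) (u v : Pt) : polarForm c u v =
    2 * c 0 * u.1 * v.1 + c 1 * (u.1 * v.2 + u.2 * v.1) + 2 * c 2 * u.2 * v.2 := rfl

theorem polarForm_isSymm (c : Fin 6 → ℝ) : (polarForm c).IsSymm :=
  ⟨fun u v => by simp only [polarForm_apply]; ring⟩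

variable {c : Fin 6 → ℝ} {A B C O S : Pt}

theorem polarForm_ne_zero (hc : ¬(c 0 = 0 ∧ c 1 = 0 ∧ c 2 = 0)) : polarForm c ≠ 0 := by
  contrapose! hc
  have h (u v : Pt) : polarForm c u v = 0 := by rw [hc]; rfl
  simp only [polarForm_apply] at h
  exact ⟨by simpa using h (1, 0) (1, 0), by simpa using h (1, 0) (0, 1),
    by simpa using h (0, 1) (0, 1)⟩

theorem polarForm_chord (hO : IsCenterOf O {p | qval c p = 0}) {X Y : Pt}
    (hX : qval c X = 0) (hY : qval c Y = 0) :
    polarForm c (X - Y) (midpoint ℝ X Y - O) = 0 := by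
  have hX' : qval c ((2 : ℝ) • O - X) = 0 := hO X hX
  have hY' : qval c ((2 : ℝ) • O - Y) = 0 := hO Y hY
  simp only [polarForm_apply, qval, midpoint_eq_smul_add, invOf_eq_inv, Prod.fst_sub, Prod.snd_sub,
    Prod.fst_add, Prod.snd_add, Prod.smul_fst, Prod.smul_snd, smul_eq_mul] at *
  linear_combination (hX + hX' - hY - hY') / 2

theorem par_side_or_par_side_of_polarForm_eq_zero (hc : ¬(c 0 = 0 ∧ c 1 = 0 ∧ c 2 = 0))
    (hO : IsCenterOf O {p | qval c p = 0}) (hA : qval c A = 0) (hB : qval c B = 0)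
    (hrad : polarForm c (midpoint ℝ B C - O) = 0) :
    Par (midpoint ℝ B C - O) (B - A) ∨ Par (midpoint ℝ B C - O) (C - A) := by
  refine par_or_par_of_bilinForm_apply_eq_zero (polarForm_isSymm c) (polarForm_ne_zero hc) hrad ?_
  have hsides : C - A = (2 : ℝ) • (midpoint ℝ B C - O) - (2 : ℝ) • (midpoint ℝ B A - O) := by
    simp only [midpoint_eq_smul_add, invOf_eq_inv]
    module
  rw [hsides, map_sub, map_smul, map_smul, polarForm_chord hO hB hA, (polarForm_isSymm c).eq, hrad]
  simp

theorem par_antipode_sub_of_par_chord (hO : IsCenterOf O {p | qval c p = 0})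
    (hA : qval c A = 0) (hB : qval c B = 0) (hC : qval c C = 0) (hS : qval c S = 0)
    (hSA : S ≠ A) (hpar : Par (midpoint ℝ B C - O) (S - A))
    (hrad : polarForm c (midpoint ℝ B C - O) ≠ 0) :
    Par ((2 : ℝ) • O - A - S) (C - B) := by
  obtain ⟨t, ht⟩ := hpar.exists_eq_smul (sub_ne_zero.2 hSA)
  have hT : (2 : ℝ) • O - A - S = (-2 : ℝ) • (midpoint ℝ S A - O) := by
    simp only [midpoint_eq_smul_add, invOf_eq_inv]
    module
  apply par_of_map_eq_zero hrad
  · rw [hT, ht, map_smul, map_smul, LinearMap.smul_apply, polarForm_chord hO hS hA,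
      smul_zero, smul_zero]
  · rw [(polarForm_isSymm c).eq, midpoint_comm, polarForm_chord hO hC hB]

end Conic

theorem smul_trace_eq {K V : Type*} [Field K] [AddCommGroup V] [Module K V] {A B C P D : V}
    {x y z : K} (hABC : ¬Collinear K {A, B, C}) (hsum : x + y + z = 1)
    (hP : P = x • A + y • B + z • C) (hAPD : Collinear K {A, P, D})
    (hBCD : Collinear K {B, C, D}) : (y + z) • D = y • B + z • C := by
  have hBC : B ≠ C := by
    rintro rfl
    exact hABC (by simpa using collinear_pair K A B)
  have hAD : A ≠ D := by
    rintro rfl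
    exact hABC (by rwa [Set.pair_comm, Set.insert_comm] at hBCD)
  obtain ⟨s, rfl⟩ := mem_affineSpan_pair_iff_exists_lineMap_eq.1
    (hBCD.mem_affineSpan_of_mem_of_ne (p₃ := D) (by simp) (by simp) (by simp) hBC)
  obtain ⟨t, ht⟩ := mem_affineSpan_pair_iff_exists_lineMap_eq.1
    (hAPD.mem_affineSpan_of_mem_of_ne (p₃ := P) (by simp) (by simp) (by simp) hAD)
  rw [AffineMap.lineMap_apply_module, AffineMap.lineMap_apply_module] at ht
  have hweights := affineIndependent_iff.1 (affineIndependent_iff_not_collinear_set.2 hABC)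
    Finset.univ ![(1 - t) - x, t * (1 - s) - y, t * s - z]
    (by simp only [Fin.sum_univ_three, Matrix.cons_val]; linear_combination -hsum)
    (by simp only [Fin.sum_univ_three, Matrix.cons_val]
        linear_combination (norm := module) ht + hP)
  obtain rfl : t * (1 - s) = y := sub_eq_zero.1 (hweights 1 (by simp))
  obtain rfl : t * s = z := sub_eq_zero.1 (hweights 2 (by simp))
  rw [AffineMap.lineMap_apply_module]
  module

theorem sum_mul_ne_sq_of_eq_sq {R : Type*} [CommRing R] [NoZeroDivisors R] [NeZero (2 : R)]
    {x y z : R} (hx : x ≠ 0) (hy : y ≠ 0) (hz : z ≠ 0)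
    (hsq : x * y + y * z + z * x = x ^ 2) : x * y + y * z + z * x ≠ y ^ 2 := by
  intro hsq'
  rcases sq_eq_sq_iff_eq_or_eq_neg.1 (hsq.symm.trans hsq') with rfl | rfl
  · exact mul_ne_zero two_ne_zero (mul_ne_zero hx hz) (by linear_combination hsq)
  · exact mul_ne_zero two_ne_zero (pow_ne_zero 2 hy) (by linear_combination -hsq)

/-- `Q` has the barycentric coordinates `(x(y + z) : y(x + z) : z(x + y))` of the isotomcomplement
of the point `(x : y : z)`. The total weight is kept on the left instead of dividing by it, so the
equation determines `Q` only when the weight is nonzero. -/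
def IsIsotomcomplement {R V : Type*} [CommRing R] [AddCommGroup V] [Module R V]
    (A B C : V) (x y z : R) (Q : V) : Prop :=
  (2 * (x * y + y * z + z * x)) • Q = (x * (y + z)) • A + (y * (x + z)) • B + (z * (x + y)) • C

namespace IsIsotomcomplement

variable {R V : Type*} [CommRing R] [AddCommGroup V] [Module R V] {A B C D Q : V} {x y z : R}

theorem swap_left (hQ : IsIsotomcomplement A B C x y z Q) :
    IsIsotomcomplement B A C y x z Q := by
  unfold IsIsotomcomplement at *
  linear_combination (norm := module) hQ

theorem swap_right (hQ : IsIsotomcomplement A B C x y z Q) :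
    IsIsotomcomplement A C B x z y Q := by
  unfold IsIsotomcomplement at *
  linear_combination (norm := module) hQ

theorem smul_trace_sub_eq (hQ : IsIsotomcomplement A B C x y z Q)
    (hD : (y + z) • D = y • B + z • C) :
    (2 * (x * y + y * z + z * x) * (y + z)) • (D - Q) =
      (y * (x * y + y * z + z * x - z ^ 2)) • (B - A) +
        (z * (x * y + y * z + z * x - y ^ 2)) • (C - A) := by
  unfold IsIsotomcomplement at hQ
  linear_combination (norm := module) (2 * (x * y + y * z + z * x)) • hD - (y + z) • hQ

end IsIsotomcomplement

section Barycentric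

variable {A B C D E F O P' Q : Pt} {x y z : ℝ}

theorem isIsotomcomplement_homoth (hst : x * y + y * z + z * x ≠ 0)
    (hP' : P' = (y * z / (x * y + y * z + z * x)) • A
        + (x * z / (x * y + y * z + z * x)) • B
        + (x * y / (x * y + y * z + z * x)) • C) :
    IsIsotomcomplement A B C x y z (homoth (cent A B C) (-(1 / 2)) P') := by
  unfold IsIsotomcomplement
  generalize hσ : x * y + y * z + z * x = σ at *
  subst hP'
  simp only [homoth, cent]
  match_scalars <;> field_simp <;> rw [← hσ] <;> ring

theorem sum_mul_eq_sq_of_trace_sub_par (hABC : ¬Collinear ℝ {A, B, C}) (hz : z ≠ 0)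
    (hD : (y + z) • D = y • B + z • C) (hQ : IsIsotomcomplement A B C x y z Q)
    (hpar : Par (D - Q) (B - A)) : x * y + y * z + z * x = y ^ 2 := by
  have h := hpar.smul_left (2 * (x * y + y * z + z * x) * (y + z))
  rw [hQ.smul_trace_sub_eq hD] at h
  have hcoeff := coeff_eq_zero_of_par (mt collinear_iff_par.2 hABC) h
  exact sub_eq_zero.1 ((mul_eq_zero.1 hcoeff).resolve_left hz)

theorem trace_ne_isotomcomplement (hABC : ¬Collinear ℝ {A, B, C})
    (hx : x ≠ 0) (hy : y ≠ 0) (hz : z ≠ 0) (hD : (y + z) • D = y • B + z • C)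
    (hQ : IsIsotomcomplement A B C x y z Q) : D ≠ Q := by
  rintro rfl
  have hpar (u : Pt) : Par (D - D) u := ⟨0, Or.inl (by rw [sub_self, zero_smul])⟩
  have hsq_y := sum_mul_eq_sq_of_trace_sub_par hABC hz hD hQ (hpar _)
  have hsq_z := sum_mul_eq_sq_of_trace_sub_par (by rwa [Set.pair_comm]) hy
    (by rwa [add_comm z y, add_comm (z • C)]) hQ.swap_right (hpar (C - A))
  exact sum_mul_ne_sq_of_eq_sq hy hz hx (by linarith) (by linarith)

theorem not_par_midpoint_sub_side (hABC : ¬Collinear ℝ {A, B, C})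
    (hx : x ≠ 0) (hy : y ≠ 0) (hz : z ≠ 0)
    (hD : (y + z) • D = y • B + z • C) (hE : (x + z) • E = x • A + z • C)
    (hQ : IsIsotomcomplement A B C x y z Q)
    (hOD : Par (midpoint ℝ B C - O) (D - Q)) (hOE : Par (midpoint ℝ C A - O) (E - Q))
    (hOBC : O ≠ midpoint ℝ B C) (hOCA : O ≠ midpoint ℝ C A) :
    ¬Par (midpoint ℝ B C - O) (B - A) := by
  intro hpar
  have hmid : midpoint ℝ C A - O = midpoint ℝ B C - O - (1 / 2 : ℝ) • (B - A) := by
    simp only [midpoint_eq_smul_add, invOf_eq_inv]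
    module
  have hparE : Par (midpoint ℝ C A - O) (B - A) := hmid ▸ hpar.sub_smul_left (1 / 2)
  have hDQ : Par (D - Q) (B - A) := hOD.symm.trans hpar (sub_ne_zero.2 hOBC.symm)
  have hEQ : Par (E - Q) (A - B) := by
    simpa using ((hOE.symm.trans hparE (sub_ne_zero.2 hOCA.symm)).symm.smul_left (-1)).symm
  have hsq_y := sum_mul_eq_sq_of_trace_sub_par hABC hz hD hQ hDQ
  have hsq_x := sum_mul_eq_sq_of_trace_sub_par (by rwa [Set.insert_comm]) hz hE hQ.swap_left hEQ
  exact sum_mul_ne_sq_of_eq_sq hx hy hz (by linarith) hsq_y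

theorem not_par_midpoint_sub_sides (hABC : ¬Collinear ℝ {A, B, C})
    (hx : x ≠ 0) (hy : y ≠ 0) (hz : z ≠ 0) (hD : (y + z) • D = y • B + z • C)
    (hE : (x + z) • E = x • A + z • C) (hF : (x + y) • F = x • A + y • B)
    (hQ : IsIsotomcomplement A B C x y z Q)
    (hO : Par (midpoint ℝ B C - O) (D - Q) ∧ Par (midpoint ℝ C A - O) (E - Q) ∧
      Par (midpoint ℝ A B - O) (F - Q))
    (hOBC : O ≠ midpoint ℝ B C) (hOCA : O ≠ midpoint ℝ C A) (hOAB : O ≠ midpoint ℝ A B) :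
    ¬Par (midpoint ℝ B C - O) (B - A) ∧ ¬Par (midpoint ℝ B C - O) (C - A) := by
  refine ⟨not_par_midpoint_sub_side hABC hx hy hz hD hE hQ hO.1 hO.2.1 hOBC hOCA, ?_⟩
  rw [midpoint_comm B C] at hO hOBC ⊢
  rw [midpoint_comm A B] at hO hOAB
  exact not_par_midpoint_sub_side (by rwa [Set.pair_comm]) hx hz hy
    (by rwa [add_comm z y, add_comm (z • C)]) hF hQ.swap_right hO.1 hO.2.2 hOBC hOAB

end Barycentric

theorem S1T1_parallel_BC
    (A B C P P' Q Q' D E F D₃ E₃ F₃ : Pt) (x y z : ℝ)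
    (hABC : AffineIndependent ℝ ![A, B, C])
    (hsum : x + y + z = 1)
    (hPco : P = x • A + y • B + z • C)
    (hx0 : x ≠ 0) (hy0 : y ≠ 0) (hz0 : z ≠ 0)
    (hx1 : x ≠ 1) (hy1 : y ≠ 1) (hz1 : z ≠ 1)
    (hst : x * y + y * z + z * x ≠ 0)
    (hP' : P' = (y * z / (x * y + y * z + z * x)) • A
        + (x * z / (x * y + y * z + z * x)) • B
        + (x * y / (x * y + y * z + z * x)) • C)
    (hQ : Q = homoth (cent A B C) (-(1 / 2)) P')
    (hQ' : Q' = homoth (cent A B C) (-(1 / 2)) P)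
    (hD : Collinear ℝ {A, P, D} ∧ Collinear ℝ {B, C, D})
    (hE : Collinear ℝ {B, P, E} ∧ Collinear ℝ {A, C, E})
    (hF : Collinear ℝ {C, P, F} ∧ Collinear ℝ {A, B, F})
    (hD₃ : Collinear ℝ {A, P', D₃} ∧ Collinear ℝ {B, C, D₃})
    (hE₃ : Collinear ℝ {B, P', E₃} ∧ Collinear ℝ {A, C, E₃})
    (hF₃ : Collinear ℝ {C, P', F₃} ∧ Collinear ℝ {A, B, F₃})
    (O H : Pt)
    (hO : Par (midpoint ℝ B C - O) (D - Q) ∧ Par (midpoint ℝ C A - O) (E - Q) ∧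
          Par (midpoint ℝ A B - O) (F - Q))
    (hH : Par (H - A) (D - Q) ∧ Par (H - B) (E - Q) ∧ Par (H - C) (F - Q))
    (hOm1 : O ≠ midpoint ℝ B C) (hOm2 : O ≠ midpoint ℝ C A) (hOm3 : O ≠ midpoint ℝ A B)
    (hOAH : ¬ Collinear ℝ {A, H, O})
    (CO : Set Pt)
    (hCO : IsConic CO) (hACO : A ∈ CO) (hBCO : B ∈ CO) (hCCO : C ∈ CO)
    (hOcen : IsCenterOf O CO)
    (hCOuniq : ∀ S : Set Pt, IsConic S → A ∈ S → B ∈ S → C ∈ S → IsCenterOf O S → S = CO)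
    (S₁ T₁ : Pt)
    (hS₁ : S₁ ∈ CO ∧ Collinear ℝ {A, H, S₁} ∧ S₁ ≠ A)
    (hT₁ : T₁ = (2 : ℝ) • O - A) :
    Par (T₁ - S₁) (C - B) := by
  have hABC' := affineIndependent_iff_not_collinear_set.1 hABC
  have hD_eq := smul_trace_eq hABC' hsum hPco hD.1 hD.2
  have hE_eq : (x + z) • E = x • A + z • C :=
    smul_trace_eq (x := y) (by rwa [Set.insert_comm]) (by rwa [add_comm y x])
      (by rwa [add_comm (y • B)]) hE.1 hE.2
  have hF_eq : (x + y) • F = x • A + y • B :=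
    smul_trace_eq (x := z) (by rwa [Set.insert_comm, Set.pair_comm])
      (by rw [← hsum]; ring) (by rw [hPco]; abel) hF.1 hF.2
  have hQ_iso := hQ ▸ isIsotomcomplement_homoth hst hP'
  obtain ⟨hnAB, hnAC⟩ := not_par_midpoint_sub_sides hABC' hx0 hy0 hz0 hD_eq hE_eq hF_eq
    hQ_iso hO hOm1 hOm2 hOm3
  have hDQ : D - Q ≠ 0 := sub_ne_zero.2 (trace_ne_isotomcomplement hABC' hx0 hy0 hz0 hD_eq hQ_iso)
  have hHA : H - A ≠ 0 := sub_ne_zero.2 <| by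
    rintro rfl
    exact hOAH (by simpa using collinear_pair ℝ H O)
  obtain ⟨c, hc, rfl⟩ := hCO
  have hnS : Par (midpoint ℝ B C - O) (S₁ - A) :=
    (hO.1.trans hH.1.symm hDQ).trans (collinear_iff_par.1 hS₁.2.1) hHA
  have hrad : polarForm c (midpoint ℝ B C - O) ≠ 0 := fun h =>
    (par_side_or_par_side_of_polarForm_eq_zero hc hOcen hACO hBCO h).elim hnAB hnAC
  exact hT₁ ▸ par_antipode_sub_of_par_chord hOcen hACO hBCO hCCO hS₁.1 hS₁.2.2 hnS hrad
end
end

section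
/- The map M = T_P ∘ K⁻¹ ∘ T_{P′} is a homothety or a translation of ℝ², and M maps the circumconic C̃_O onto the inconic I (in particular M(O) = Q). -/
noncomputable section

/-!
Work in homogeneous barycentric coordinates, with `P = (x : y : z)`. The values of `M` at the
vertices satisfy `M B - M A = ρ (B - A)`, and cyclically, with the same symmetric ratio `ρ`, so `M`
is a homothety or a translation. They also satisfy the equation of the inconic, so `M⁻¹(I)` is a
conic through `A`, `B`, `C`. Finally `M` carries the midpoint of `BC` to a point of the line `QD`;
as `M` preserves directions, it maps the line `OD₀` onto `QD`, and likewise for the other sides.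
Hence `M O = Q`, and `M⁻¹(I)` has center `O`.
-/

section Barycentric

variable {k V W : Type*} [Field k] [AddCommGroup V] [Module k V] [AddCommGroup W] [Module k W]

/-- The point with homogeneous barycentric coordinates `(x : y : z)` with respect to `ABC`, and the
junk value `0` when `x + y + z = 0`. It lets cevian traces and conics be written without
normalizing the coordinates. -/
def bary (A B C : V) (x y z : k) : V :=
  (x + y + z)⁻¹ • (x • A + y • B + z • C)

lemma bary_of_sum_eq_one (A B C : V) {x y z : k} (h : x + y + z = 1) :
    bary A B C x y z = x • A + y • B + z • C := by
  rw [bary, h, inv_one, one_smul]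

lemma bary_rotate (A B C : V) (x y z : k) : bary B C A y z x = bary A B C x y z := by
  rw [bary, bary, show y + z + x = x + y + z by ring]
  module

lemma bary_mul_left (A B C : V) (x y z : k) {a : k} (ha : a ≠ 0) :
    bary A B C (a * x) (a * y) (a * z) = bary A B C x y z := by
  simp only [bary, ← mul_add, mul_smul, ← smul_add]
  rw [mul_inv, mul_smul, smul_comm, inv_smul_smul₀ ha]

lemma map_bary (f : V →ᵃ[k] W) (A B C : V) {x y z : k} (h : x + y + z ≠ 0) :
    f (bary A B C x y z) = bary (f A) (f B) (f C) x y z := by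
  rw [f.decomp]
  simp only [Pi.add_apply, bary, map_smul, map_add]
  match_scalars <;> field_simp

lemma affineIndependent_rotate {A B C : V} (h : AffineIndependent k ![A, B, C]) :
    AffineIndependent k ![B, C, A] :=
  h.comm_left.comm_right

lemma coeffs_eq_zero_of_affineIndependent {A B C : V}
    (hABC : AffineIndependent k ![A, B, C]) {u v w : k} (hsum : u + v + w = 0)
    (h : u • A + v • B + w • C = 0) : u = 0 ∧ v = 0 ∧ w = 0 := by
  have key := affineIndependent_iff.1 hABC Finset.univ ![u, v, w]
    (by simpa [Fin.sum_univ_three] using hsum) (by simpa [Fin.sum_univ_three] using h)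
  exact ⟨key 0 (by simp), key 1 (by simp), key 2 (by simp)⟩

lemma affineSpan_triple_eq_top {A B C : V} (hV : Module.finrank k V = 2)
    (hABC : AffineIndependent k ![A, B, C]) : affineSpan k {A, B, C} = ⊤ := by
  have := FiniteDimensional.of_finrank_pos (hV ▸ two_pos)
  have h := hABC.affineSpan_eq_top_iff_card_eq_finrank_add_one.2 (by simp [hV])
  rwa [Matrix.range_cons, Matrix.range_cons, Matrix.range_cons, Matrix.range_empty,
    Set.union_empty] at h

lemma cevian_trace_eq {A B C D : V} {x y z : k} (hABC : AffineIndependent k ![A, B, C])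
    (hxyz : x + y + z ≠ 0) (hyz : y + z ≠ 0)
    (hAPD : Collinear k {A, bary A B C x y z, D}) (hBCD : Collinear k {B, C, D}) :
    D = bary A B C 0 y z := by
  have hAP : A ≠ bary A B C x y z := by
    intro h
    have hA : (x + y + z) • A = x • A + y • B + z • C := by
      nth_rw 1 [h, bary, smul_inv_smul₀ hxyz]
    have hcoeff := coeffs_eq_zero_of_affineIndependent hABC (u := -(y + z)) (v := y) (w := z)
      (by ring) (by linear_combination (norm := module) -hA)
    exact hyz (neg_eq_zero.1 hcoeff.1)
  have hBC : B ≠ C := hABC.injective.ne (show (1 : Fin 3) ≠ 2 by decide)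
  obtain ⟨s, hs⟩ := mem_affineSpan_pair_iff_exists_lineMap_eq.1
    (hAPD.mem_affineSpan_of_mem_of_ne (p₃ := D) (by simp) (by simp) (by simp) hAP)
  obtain ⟨t, ht⟩ := mem_affineSpan_pair_iff_exists_lineMap_eq.1
    (hBCD.mem_affineSpan_of_mem_of_ne (p₃ := D) (by simp) (by simp) (by simp) hBC)
  rw [AffineMap.lineMap_apply_module, bary] at hs
  rw [AffineMap.lineMap_apply_module] at ht
  obtain ⟨hA, -, -⟩ := coeffs_eq_zero_of_affineIndependent hABC
    (u := 1 - s + s * (x + y + z)⁻¹ * x)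
    (v := s * (x + y + z)⁻¹ * y - (1 - t)) (w := s * (x + y + z)⁻¹ * z - t)
    (by field_simp; ring) (by linear_combination (norm := module) hs.trans ht.symm)
  have hs' : s = (x + y + z) / (y + z) := by
    field_simp at hA ⊢
    linear_combination -hA
  rw [← hs, hs', bary, zero_add]
  match_scalars <;> field_simp
  ring

lemma eq_of_sub_eq_smul {X Y u v : V} {a b : k} (huv : LinearIndependent k ![u, v])
    (hu : X - Y = a • u) (hv : X - Y = b • v) : X = Y := by
  have ha : a = 0 := (LinearIndependent.pair_iff.1 huv a (-b) (by
    rw [neg_smul, ← hu, hv, add_neg_cancel])).1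
  rw [← sub_eq_zero, hu, ha, zero_smul]

lemma linear_eq_smul_id_of_affineSpan_eq_top {A B C : V} {f : V →ᵃ[k] V} {r : k}
    (hspan : affineSpan k {A, B, C} = ⊤)
    (hB : f B - f A = r • (B - A)) (hC : f C - f A = r • (C - A)) :
    f.linear = r • LinearMap.id := by
  suffices f = r • AffineMap.id k V + AffineMap.const k V (f A - r • A) by
    rw [this]
    simp
  refine AffineMap.ext_on hspan ?_
  intro X hX
  simp only [AffineMap.coe_add, AffineMap.coe_smul, AffineMap.coe_id, AffineMap.coe_const,
    Pi.add_apply, Pi.smul_apply, id_eq, Function.const_apply]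
  rcases hX with rfl | rfl | rfl
  · module
  · linear_combination (norm := module) hB
  · linear_combination (norm := module) hC

lemma sub_eq_smul_sub_of_linear_eq {f : V →ᵃ[k] V} {r : k} (hf : f.linear = r • LinearMap.id)
    (X Y : V) : f X - f Y = r • (X - Y) := by
  simpa [hf] using (f.linearMap_vsub X Y).symm

lemma apply_eq_smul_add_of_linear_eq {f : V →ᵃ[k] V} {r : k} (hf : f.linear = r • LinearMap.id)
    (X : V) : f X = r • X + f 0 := by
  rw [← sub_eq_iff_eq_add, sub_eq_smul_sub_of_linear_eq hf, sub_zero]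

lemma surjective_of_linear_eq {f : V →ᵃ[k] V} {r : k} (hr : r ≠ 0)
    (hf : f.linear = r • LinearMap.id) : Function.Surjective f := by
  rw [← AffineMap.linear_surjective_iff, hf]
  exact fun X => ⟨r⁻¹ • X, smul_inv_smul₀ hr X⟩

end Barycentric

section CevianDilation

variable {k V : Type*} [Field k] [AddCommGroup V] [Module k V]
variable {A B C O : V} {x y z : k} {T T' : V →ᵃ[k] V}

/-- The point `(x : y : z)` lies on no side line of `ABC` and on no side line of its
anticomplementary triangle; the latter have the equations `y + z = 0`, `z + x = 0`, `x + y = 0`. -/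
structure AvoidsSides (x y z : k) : Prop where
  fst_ne_zero : x ≠ 0
  snd_ne_zero : y ≠ 0
  thd_ne_zero : z ≠ 0
  snd_add_thd_ne_zero : y + z ≠ 0
  thd_add_fst_ne_zero : z + x ≠ 0
  fst_add_snd_ne_zero : x + y ≠ 0

lemma avoidsSides_of_sum_eq_one (hsum : x + y + z = 1) (hx0 : x ≠ 0) (hy0 : y ≠ 0) (hz0 : z ≠ 0)
    (hx1 : x ≠ 1) (hy1 : y ≠ 1) (hz1 : z ≠ 1) : AvoidsSides x y z :=
  ⟨hx0, hy0, hz0, fun h => hx1 (by linear_combination hsum - h),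
    fun h => hy1 (by linear_combination hsum - h), fun h => hz1 (by linear_combination hsum - h)⟩

lemma AvoidsSides.rotate (h : AvoidsSides x y z) : AvoidsSides y z x :=
  ⟨h.2, h.3, h.1, h.5, h.6, h.4⟩

lemma inv_add_inv_ne_zero {a b : k} (ha : a ≠ 0) (hb : b ≠ 0) (h : a + b ≠ 0) :
    a⁻¹ + b⁻¹ ≠ 0 := by
  rw [inv_add_inv ha hb]
  exact div_ne_zero h (mul_ne_zero ha hb)

lemma AvoidsSides.inv (h : AvoidsSides x y z) : AvoidsSides x⁻¹ y⁻¹ z⁻¹ :=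
  ⟨inv_ne_zero h.1, inv_ne_zero h.2, inv_ne_zero h.3, inv_add_inv_ne_zero h.2 h.3 h.4,
    inv_add_inv_ne_zero h.3 h.1 h.5, inv_add_inv_ne_zero h.1 h.2 h.6⟩

lemma AvoidsSides.inv_sum_ne_zero (h : AvoidsSides x y z) (hs : x * y + y * z + z * x ≠ 0) :
    x⁻¹ + y⁻¹ + z⁻¹ ≠ 0 := by
  obtain ⟨hx, hy, hz, -⟩ := h
  rw [show x⁻¹ + y⁻¹ + z⁻¹ = (x * y + y * z + z * x) / (x * y * z) by field_simp; ring]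
  exact div_ne_zero hs (mul_ne_zero (mul_ne_zero hx hy) hz)

lemma isotomicConjugate_eq_bary (A B C : V) (hsides : AvoidsSides x y z) :
    (y * z / (x * y + y * z + z * x)) • A + (x * z / (x * y + y * z + z * x)) • B
      + (x * y / (x * y + y * z + z * x)) • C = bary A B C x⁻¹ y⁻¹ z⁻¹ := by
  obtain ⟨hx, hy, hz, -⟩ := hsides
  rw [← bary_mul_left A B C _ _ _ (mul_ne_zero (mul_ne_zero hx hy) hz), bary,
    show x * y * z * x⁻¹ = y * z by field_simp, show x * y * z * y⁻¹ = x * z by field_simp,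
    show x * y * z * z⁻¹ = x * y by field_simp,
    show y * z + x * z + x * y = x * y + y * z + z * x by ring]
  module

/-- The map `K⁻¹` carrying the midpoints of the sides of `ABC` to the opposite vertices. Writing it
as `X ↦ A + B + C - 2 X` avoids dividing by `3`. -/
def anticomplement (A B C : V) : V →ᵃ[k] V :=
  AffineMap.const k V (A + B + C) - (2 : k) • AffineMap.id k V

lemma anticomplement_apply (A B C X : V) :
    anticomplement (k := k) A B C X = A + B + C - (2 : k) • X := rfl

lemma anticomplement_rotate (A B C : V) :
    anticomplement (k := k) B C A = anticomplement A B C := by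
  ext X
  rw [anticomplement_apply, anticomplement_apply]
  abel

/-- `T` carries `ABC` to the cevian triangle of the point `(x : y : z)`, that is, `T = T_P`. -/
structure IsCevianMap (T : V →ᵃ[k] V) (A B C : V) (x y z : k) : Prop where
  map_fst : T A = bary A B C 0 y z
  map_snd : T B = bary A B C x 0 z
  map_thd : T C = bary A B C x y 0

lemma IsCevianMap.rotate (h : IsCevianMap T A B C x y z) : IsCevianMap T B C A y z x where
  map_fst := by rw [h.map_snd, bary_rotate A B C]
  map_snd := by rw [h.map_thd, bary_rotate A B C]
  map_thd := by rw [h.map_fst, bary_rotate A B C]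

lemma isCevianMap_of_collinear (hABC : AffineIndependent k ![A, B, C]) (hxyz : x + y + z ≠ 0)
    (hsides : AvoidsSides x y z)
    (hA : Collinear k {A, bary A B C x y z, T A} ∧ Collinear k {B, C, T A})
    (hB : Collinear k {B, bary A B C x y z, T B} ∧ Collinear k {A, C, T B})
    (hC : Collinear k {C, bary A B C x y z, T C} ∧ Collinear k {A, B, T C}) :
    IsCevianMap T A B C x y z where
  map_fst := cevian_trace_eq hABC hxyz hsides.4 hA.1 hA.2
  map_snd := by
    rw [← bary_rotate A B C] at hB ⊢
    rw [Set.insert_comm A C] at hB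
    exact cevian_trace_eq (affineIndependent_rotate hABC) (by rwa [add_rotate] at hxyz) hsides.5
      hB.1 hB.2
  map_thd := by
    rw [← bary_rotate A B C, ← bary_rotate B C A] at hC ⊢
    exact cevian_trace_eq (affineIndependent_rotate (affineIndependent_rotate hABC))
      (by rwa [← add_rotate] at hxyz) hsides.6 hC.1 hC.2

/-- The map `M = T_P ∘ K⁻¹ ∘ T_{P'}`. -/
def cevianDilation (T T' : V →ᵃ[k] V) (A B C : V) : V →ᵃ[k] V :=
  T.comp ((anticomplement A B C).comp T')

lemma cevianDilation_apply (T T' : V →ᵃ[k] V) (A B C X : V) :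
    cevianDilation T T' A B C X = T (anticomplement (k := k) A B C (T' X)) := rfl

lemma cevianDilation_rotate (T T' : V →ᵃ[k] V) (A B C : V) :
    cevianDilation T T' B C A = cevianDilation T T' A B C := by
  rw [cevianDilation, anticomplement_rotate, cevianDilation]

/-- The ratio of the homothety `M` for `P = (x : y : z)`; when it is `1`, `M` is a translation. -/
def cevianRatio (x y z : k) : k :=
  -(4 * x * y * z) / ((y + z) * (z + x) * (x + y))

lemma cevianRatio_rotate (x y z : k) : cevianRatio y z x = cevianRatio x y z := by
  rw [cevianRatio, cevianRatio]
  congr 1 <;> ring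

lemma anticomplement_bary (A B C : V) (hyz : y + z ≠ 0) :
    anticomplement (k := k) A B C (bary A B C 0 z y) = bary A B C (y + z) (y - z) (z - y) := by
  rw [anticomplement_apply, bary, bary, zero_add, add_comm z y,
    show y + z + (y - z) + (z - y) = y + z by ring]
  match_scalars <;> field_simp <;> ring

lemma vertex_image_coords_sum (x y z : k) :
    x * (y - z) ^ 2 + y * (z + x) ^ 2 + z * (x + y) ^ 2 = (y + z) * (z + x) * (x + y) := by
  ring

lemma cevianDilation_vertex (hT : IsCevianMap T A B C x y z)
    (hT' : IsCevianMap T' A B C x⁻¹ y⁻¹ z⁻¹) (hsides : AvoidsSides x y z) :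
    cevianDilation T T' A B C A =
      bary A B C (x * (y - z) ^ 2) (y * (z + x) ^ 2) (z * (x + y) ^ 2) := by
  obtain ⟨-, hy, hz, hyz, hzx, hxy⟩ := hsides
  have hD₃ : T' A = bary A B C 0 z y := by
    rw [hT'.map_fst, ← bary_mul_left A B C _ _ _ (mul_ne_zero hy hz)]
    rw [mul_zero]
    congr 1 <;> field_simp
  rw [cevianDilation_apply, hD₃, anticomplement_bary A B C hyz,
    map_bary T A B C (by rwa [show y + z + (y - z) + (z - y) = y + z by ring]),
    hT.map_fst, hT.map_snd, hT.map_thd]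
  simp only [bary, vertex_image_coords_sum, show y + z + (y - z) + (z - y) = y + z by ring,
    zero_add, add_zero, add_comm x z]
  match_scalars <;> field_simp <;> ring

lemma cevianDilation_sub (hT : IsCevianMap T A B C x y z)
    (hT' : IsCevianMap T' A B C x⁻¹ y⁻¹ z⁻¹) (hsides : AvoidsSides x y z) :
    cevianDilation T T' A B C B - cevianDilation T T' A B C A = cevianRatio x y z • (B - A) := by
  have hB := cevianDilation_vertex hT.rotate hT'.rotate hsides.rotate
  rw [cevianDilation_rotate] at hB
  rw [hB, cevianDilation_vertex hT hT' hsides, cevianRatio, bary, bary,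
    vertex_image_coords_sum, vertex_image_coords_sum]
  obtain ⟨-, -, -, hyz, hzx, hxy⟩ := hsides
  match_scalars <;> field_simp <;> ring

lemma cevianDilation_linear (hspan : affineSpan k {A, B, C} = ⊤) (hT : IsCevianMap T A B C x y z)
    (hT' : IsCevianMap T' A B C x⁻¹ y⁻¹ z⁻¹) (hsides : AvoidsSides x y z) :
    (cevianDilation T T' A B C).linear = cevianRatio x y z • LinearMap.id := by
  refine linear_eq_smul_id_of_affineSpan_eq_top hspan (cevianDilation_sub hT hT' hsides) ?_
  have hA := cevianDilation_sub hT.rotate.rotate hT'.rotate.rotate hsides.rotate.rotate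
  rw [cevianDilation_rotate, cevianDilation_rotate, cevianRatio_rotate, cevianRatio_rotate] at hA
  rw [← neg_sub, hA, ← smul_neg, neg_sub]

/-- The point `Q = K(ι(P))` for `P = (x : y : z)`. -/
def isotomcomplement (A B C : V) (x y z : k) : V :=
  bary A B C (x * (y + z)) (y * (z + x)) (z * (x + y))

lemma isotomcomplement_rotate (A B C : V) (x y z : k) :
    isotomcomplement B C A y z x = isotomcomplement A B C x y z :=
  bary_rotate A B C _ _ _

lemma isotomcomplement_coords_sum (x y z : k) :
    x * (y + z) + y * (z + x) + z * (x + y) = 2 * (x * y + y * z + z * x) := by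
  ring

variable [Invertible (2 : k)]

lemma cevianRatio_ne_zero (hsides : AvoidsSides x y z) : cevianRatio x y z ≠ 0 := by
  obtain ⟨hx, hy, hz, hyz, hzx, hxy⟩ := hsides
  have h2 : (4 : k) ≠ 0 := by
    rw [show (4 : k) = 2 * 2 by norm_num]
    exact mul_ne_zero (Invertible.ne_zero 2) (Invertible.ne_zero 2)
  simp [cevianRatio, *]

lemma cevianDilation_midpoint_sub (hT : IsCevianMap T A B C x y z)
    (hT' : IsCevianMap T' A B C x⁻¹ y⁻¹ z⁻¹) (hsides : AvoidsSides x y z)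
    (hs : x * y + y * z + z * x ≠ 0) :
    cevianDilation T T' A B C (midpoint k B C) - isotomcomplement A B C x y z =
      ((x ^ 2 - (x * y + y * z + z * x)) / ((x + y) * (z + x))) •
        (T A - isotomcomplement A B C x y z) := by
  have h2 : (2 : k) ≠ 0 := Invertible.ne_zero 2
  have hB := cevianDilation_vertex hT.rotate hT'.rotate hsides.rotate
  have hC := cevianDilation_vertex hT.rotate.rotate hT'.rotate.rotate hsides.rotate.rotate
  rw [cevianDilation_rotate] at hB
  rw [cevianDilation_rotate, cevianDilation_rotate] at hC
  obtain ⟨-, -, -, hyz, hzx, hxy⟩ := hsides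
  set s := x * y + y * z + z * x with hsdef
  rw [AffineMap.map_midpoint, hB, hC, hT.map_fst, midpoint_eq_smul_add, invOf_eq_inv,
    isotomcomplement, bary, bary, bary, bary, isotomcomplement_coords_sum, ← hsdef,
    vertex_image_coords_sum, vertex_image_coords_sum, zero_add]
  match_scalars <;> field_simp <;> rw [hsdef] <;> ring

lemma linearIndependent_trace_sub_isotomcomplement (hABC : AffineIndependent k ![A, B, C])
    (hsides : AvoidsSides x y z) (hs : x * y + y * z + z * x ≠ 0) :
    LinearIndependent k ![bary A B C 0 y z - isotomcomplement A B C x y z,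
      bary A B C x 0 z - isotomcomplement A B C x y z] := by
  have h2 : (2 : k) ≠ 0 := Invertible.ne_zero 2
  obtain ⟨hx, hy, hz, hyz, hzx, -⟩ := hsides
  rw [LinearIndependent.pair_iff]
  intro a b hab
  set s := x * y + y * z + z * x with hsdef
  obtain ⟨hA, hB, -⟩ := coeffs_eq_zero_of_affineIndependent hABC
    (u := b * (x / (z + x)) - (a + b) * (x * (y + z) / (2 * s)))
    (v := a * (y / (y + z)) - (a + b) * (y * (z + x) / (2 * s)))
    (w := a * (z / (y + z)) + b * (z / (z + x)) - (a + b) * (z * (x + y) / (2 * s)))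
    (by field_simp; rw [hsdef]; ring)
    (by
      rw [← hab, isotomcomplement, bary, bary, bary, isotomcomplement_coords_sum, ← hsdef, zero_add,
        add_zero, add_comm x z]
      match_scalars <;> field_simp <;> ring)
  have hb : 2 * s * b = (a + b) * ((y + z) * (z + x)) := by
    field_simp at hA
    refine mul_left_cancel₀ hx ?_
    linear_combination hA
  have ha : 2 * s * a = (a + b) * ((y + z) * (z + x)) := by
    field_simp at hB
    refine mul_left_cancel₀ hy ?_
    linear_combination hB
  have hsum : a + b = 0 := by
    refine (mul_eq_zero.1 (?_ : 2 * z ^ 2 * (a + b) = 0)).resolve_left (by simp [h2, hz])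
    linear_combination -ha - hb + 2 * (a + b) * hsdef
  simpa [hsum, h2, hs] using And.intro ha hb

lemma exists_cevianDilation_sub_eq_smul (hspan : affineSpan k {A, B, C} = ⊤)
    (hT : IsCevianMap T A B C x y z) (hT' : IsCevianMap T' A B C x⁻¹ y⁻¹ z⁻¹)
    (hsides : AvoidsSides x y z) (hs : x * y + y * z + z * x ≠ 0)
    (hO : ∃ t : k, midpoint k B C - O = t • (T A - isotomcomplement A B C x y z)) :
    ∃ a : k, cevianDilation T T' A B C O - isotomcomplement A B C x y z =
      a • (T A - isotomcomplement A B C x y z) := by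
  obtain ⟨t, ht⟩ := hO
  have hmid := cevianDilation_midpoint_sub hT hT' hsides hs
  have hdir := sub_eq_smul_sub_of_linear_eq (cevianDilation_linear hspan hT hT' hsides)
    (midpoint k B C) O
  rw [ht, smul_smul] at hdir
  rw [← sub_sub_sub_cancel_left _ _ (cevianDilation T T' A B C (midpoint k B C))]
  exact ⟨_, by rw [hmid, hdir, ← sub_smul]⟩

lemma cevianDilation_eq_isotomcomplement (hABC : AffineIndependent k ![A, B, C])
    (hspan : affineSpan k {A, B, C} = ⊤)
    (hT : IsCevianMap T A B C x y z) (hT' : IsCevianMap T' A B C x⁻¹ y⁻¹ z⁻¹)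
    (hsides : AvoidsSides x y z) (hs : x * y + y * z + z * x ≠ 0)
    (hOA : ∃ t : k, midpoint k B C - O = t • (T A - isotomcomplement A B C x y z))
    (hOB : ∃ t : k, midpoint k C A - O = t • (T B - isotomcomplement A B C x y z)) :
    cevianDilation T T' A B C O = isotomcomplement A B C x y z := by
  obtain ⟨a, ha⟩ := exists_cevianDilation_sub_eq_smul hspan hT hT' hsides hs hOA
  have hspan' : affineSpan k {B, C, A} = ⊤ := by
    rwa [Set.insert_comm, Set.pair_comm] at hspan
  obtain ⟨b, hb⟩ := exists_cevianDilation_sub_eq_smul hspan' hT.rotate hT'.rotate hsides.rotate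
    (by rwa [add_rotate] at hs) (by rwa [isotomcomplement_rotate])
  rw [cevianDilation_rotate, isotomcomplement_rotate, hT.map_snd] at hb
  rw [hT.map_fst] at ha
  exact eq_of_sub_eq_smul (linearIndependent_trace_sub_isotomcomplement hABC hsides hs) ha hb

end CevianDilation

section Conic

variable {A B C Z p q : Pt} {c : Fin 6 → ℝ} {x y z : ℝ}

/-- The symmetric form polarizing the quadratic polynomial `qval c`. It is affine in each argument,
and `qpolar c p q = 0` says that `q` lies on the polar line of `p`. -/
def qpolar (c : Fin 6 → ℝ) (p q : Pt) : ℝ :=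
  c 0 * p.1 * q.1 + c 1 * (p.1 * q.2 + p.2 * q.1) / 2 + c 2 * p.2 * q.2
    + c 3 * (p.1 + q.1) / 2 + c 4 * (p.2 + q.2) / 2 + c 5

lemma qpolar_self (c : Fin 6 → ℝ) (p : Pt) : qpolar c p p = qval c p := by
  rw [qpolar, qval]
  ring

lemma qpolar_comm (c : Fin 6 → ℝ) (p q : Pt) : qpolar c p q = qpolar c q p := by
  rw [qpolar, qpolar]
  ring

lemma qpolar_bary_left (c : Fin 6 → ℝ) (A B C q : Pt) {u v w : ℝ} (h : u + v + w ≠ 0) :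
    (u + v + w) * qpolar c (bary A B C u v w) q =
      u * qpolar c A q + v * qpolar c B q + w * qpolar c C q := by
  simp only [qpolar, bary, Prod.smul_fst, Prod.smul_snd, Prod.fst_add, Prod.snd_add, smul_eq_mul]
  field_simp
  ring

lemma qval_bary (c : Fin 6 → ℝ) (A B C : Pt) {u v w : ℝ} (h : u + v + w ≠ 0) :
    (u + v + w) ^ 2 * qval c (bary A B C u v w) =
      u ^ 2 * qpolar c A A + v ^ 2 * qpolar c B B + w ^ 2 * qpolar c C C
        + 2 * (u * v * qpolar c A B + v * w * qpolar c B C + w * u * qpolar c C A) := by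
  have hleft := fun q => qpolar_bary_left c A B C q h
  have hright : ∀ q, (u + v + w) * qpolar c q (bary A B C u v w) =
      u * qpolar c q A + v * qpolar c q B + w * qpolar c q C := by
    simpa only [qpolar_comm c _ A, qpolar_comm c _ B, qpolar_comm c _ C,
      qpolar_comm c (bary _ _ _ _ _ _)] using hleft
  rw [← qpolar_self]
  linear_combination (u + v + w) * hleft (bary A B C u v w) + u * hright A + v * hright B
    + w * hright C + u * v * qpolar_comm c B A + v * w * qpolar_comm c C B
    + w * u * qpolar_comm c A C

lemma qpolar_eq_zero_of_isTangentLineAt {L : Set Pt} (h : IsTangentLineAt c L p) (hq : q ∈ L) :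
    qpolar c p q = 0 := by
  obtain ⟨hp, -, rfl⟩ := h
  simp only [Set.mem_ofPred_eq, qgrad, qval] at hq hp
  rw [qpolar]
  linear_combination hp + hq / 2

lemma left_mem_lineThru (X Y : Pt) : X ∈ lineThru X Y := ⟨0, by simp⟩

lemma right_mem_lineThru (X Y : Pt) : Y ∈ lineThru X Y := ⟨1, by simp⟩

lemma qpolar_of_isTangentLineAt_trace (hyz : y + z ≠ 0)
    (h : IsTangentLineAt c (lineThru B C) (bary A B C 0 y z)) :
    y * qpolar c B B + z * qpolar c B C = 0 ∧ y * qpolar c B C + z * qpolar c C C = 0 := by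
  have hB := qpolar_bary_left c A B C B (by rwa [zero_add] : 0 + y + z ≠ 0)
  have hC := qpolar_bary_left c A B C C (by rwa [zero_add] : 0 + y + z ≠ 0)
  rw [qpolar_eq_zero_of_isTangentLineAt h (left_mem_lineThru B C), qpolar_comm c C B] at hB
  rw [qpolar_eq_zero_of_isTangentLineAt h (right_mem_lineThru B C)] at hC
  exact ⟨by linear_combination -hB, by linear_combination -hC⟩

/-- The quadratic polynomial with coefficients `c` is tangent to the sides of `ABC` at the traces
of the point `(x : y : z)`. -/
structure IsInconic (c : Fin 6 → ℝ) (A B C : Pt) (x y z : ℝ) : Prop where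
  tangent_fst : IsTangentLineAt c (lineThru B C) (bary A B C 0 y z)
  tangent_snd : IsTangentLineAt c (lineThru C A) (bary A B C x 0 z)
  tangent_thd : IsTangentLineAt c (lineThru A B) (bary A B C x y 0)

lemma IsInconic.rotate (h : IsInconic c A B C x y z) : IsInconic c B C A y z x where
  tangent_fst := by rw [bary_rotate A B C]; exact h.tangent_snd
  tangent_snd := by rw [bary_rotate A B C]; exact h.tangent_thd
  tangent_thd := by rw [bary_rotate A B C]; exact h.tangent_fst

lemma IsInconic.qval_bary_eq (h : IsInconic c A B C x y z) (hsides : AvoidsSides x y z) {u v w : ℝ}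
    (huvw : u + v + w ≠ 0) :
    (u + v + w) ^ 2 * qval c (bary A B C u v w) =
      x ^ 2 * qpolar c A A * ((u / x) ^ 2 + (v / y) ^ 2 + (w / z) ^ 2
        - 2 * (u / x * (v / y) + v / y * (w / z) + w / z * (u / x))) := by
  obtain ⟨hBB, hBC⟩ := qpolar_of_isTangentLineAt_trace hsides.4 h.tangent_fst
  obtain ⟨-, hCA⟩ := qpolar_of_isTangentLineAt_trace hsides.5 h.rotate.tangent_fst
  obtain ⟨hAA, hAB⟩ := qpolar_of_isTangentLineAt_trace hsides.6 h.rotate.rotate.tangent_fst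
  obtain ⟨hx, hy, hz, -⟩ := hsides
  set μ := x ^ 2 * qpolar c A A with hμ
  have eAA : qpolar c A A = μ / x ^ 2 := by rw [hμ]; field_simp
  have eAB : qpolar c A B = -μ / (x * y) := by field_simp; linear_combination x * hAA + hμ
  have eCA : qpolar c C A = -μ / (z * x) := by field_simp; linear_combination x * hCA + hμ
  have eBB : qpolar c B B = μ / y ^ 2 := by
    field_simp
    linear_combination y * hAB - x * hAA - hμ
  have eBC : qpolar c B C = -μ / (y * z) := by
    rw [eBB] at hBB
    field_simp at hBB ⊢
    linear_combination hBB
  have eCC : qpolar c C C = μ / z ^ 2 := by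
    rw [eBC] at hBC
    field_simp at hBC ⊢
    linear_combination hBC
  rw [qval_bary c A B C huvw, eAA, eAB, eCA, eBB, eBC, eCC]
  field_simp
  ring

lemma IsInconic.qval_cevianDilation_vertex {T T' : Pt →ᵃ[ℝ] Pt} (h : IsInconic c A B C x y z)
    (hT : IsCevianMap T A B C x y z) (hT' : IsCevianMap T' A B C x⁻¹ y⁻¹ z⁻¹)
    (hsides : AvoidsSides x y z) : qval c (cevianDilation T T' A B C A) = 0 := by
  have hsum : x * (y - z) ^ 2 + y * (z + x) ^ 2 + z * (x + y) ^ 2 ≠ 0 := by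
    rw [vertex_image_coords_sum]
    exact mul_ne_zero (mul_ne_zero hsides.4 hsides.5) hsides.6
  have hvertex := h.qval_bary_eq hsides hsum
  rw [← cevianDilation_vertex hT hT' hsides, mul_div_cancel_left₀ _ hsides.1,
    mul_div_cancel_left₀ _ hsides.2, mul_div_cancel_left₀ _ hsides.3] at hvertex
  -- `a² + b² + c² - 2 (ab + bc + ca)` vanishes at the squares of three numbers with sum zero, here
  -- `y - z`, `z + x` and `-(x + y)`.
  refine (mul_eq_zero.1 (hvertex.trans ?_)).resolve_left (pow_ne_zero 2 hsum)
  ring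

lemma IsInconic.qval_cevianDilation {T T' : Pt →ᵃ[ℝ] Pt} (h : IsInconic c A B C x y z)
    (hT : IsCevianMap T A B C x y z) (hT' : IsCevianMap T' A B C x⁻¹ y⁻¹ z⁻¹)
    (hsides : AvoidsSides x y z) : qval c (cevianDilation T T' A B C A) = 0 ∧
      qval c (cevianDilation T T' A B C B) = 0 ∧ qval c (cevianDilation T T' A B C C) = 0 := by
  have hB := h.rotate.qval_cevianDilation_vertex hT.rotate hT'.rotate hsides.rotate
  have hC := h.rotate.rotate.qval_cevianDilation_vertex hT.rotate.rotate hT'.rotate.rotate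
    hsides.rotate.rotate
  rw [cevianDilation_rotate] at hB hC
  rw [cevianDilation_rotate] at hC
  exact ⟨h.qval_cevianDilation_vertex hT hT' hsides, hB, hC⟩

lemma IsConic.preimage {S : Set Pt} (hS : IsConic S) {f : Pt →ᵃ[ℝ] Pt} {r : ℝ} (hr : r ≠ 0)
    (hf : f.linear = r • LinearMap.id) : IsConic (f ⁻¹' S) := by
  obtain ⟨c, hc, rfl⟩ := hS
  refine ⟨![r ^ 2 * c 0, r ^ 2 * c 1, r ^ 2 * c 2, r * (qgrad c (f 0)).1,
    r * (qgrad c (f 0)).2, qval c (f 0)], by simpa [hr] using hc, ?_⟩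
  ext X
  simp only [Set.mem_preimage, Set.mem_ofPred_eq]
  rw [apply_eq_smul_add_of_linear_eq hf X]
  refine Eq.congr_left ?_
  simp [qval, qgrad]
  ring

lemma IsCenterOf.preimage {S : Set Pt} {f : Pt →ᵃ[ℝ] Pt} (h : IsCenterOf (f Z) S) :
    IsCenterOf Z (f ⁻¹' S) := by
  intro p hp
  have hreflect : f ((2 : ℝ) • Z - p) = (2 : ℝ) • f Z - f p := by
    rw [f.decomp]
    simp only [Pi.add_apply, map_sub, map_smul]
    module
  rw [Set.mem_preimage, hreflect]
  exact h _ hp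

lemma homothety_or_translation_of_linear_eq {f : Pt →ᵃ[ℝ] Pt} {r : ℝ} (hr : r ≠ 0)
    (hf : f.linear = r • LinearMap.id) :
    (∃ (S : Pt) (s : ℝ), s ≠ 0 ∧ ∀ X, f X = homoth S s X) ∨ ∃ v, ∀ X, f X = X + v := by
  by_cases hr1 : r = 1
  · exact Or.inr ⟨f 0, fun X => by rw [apply_eq_smul_add_of_linear_eq hf, hr1, one_smul]⟩
  · refine Or.inl ⟨(1 - r)⁻¹ • f 0, r, hr, fun X => ?_⟩
    have h1 : 1 - r ≠ 0 := sub_ne_zero.2 (Ne.symm hr1)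
    rw [apply_eq_smul_add_of_linear_eq hf, homoth]
    match_scalars <;> field_simp
    ring

end Conic

section Plane

variable {A B C O : Pt} {x y z : ℝ}

lemma Par.exists_eq_smul_s11 {u v : Pt} (h : Par u v) (hv : v ≠ 0) : ∃ t : ℝ, u = t • v := by
  obtain ⟨t, rfl | rfl⟩ := h
  · exact ⟨t, rfl⟩
  · exact ⟨t⁻¹, (inv_smul_smul₀ (left_ne_zero_of_smul hv) u).symm⟩

lemma homoth_cent_neg_two (A B C X : Pt) :
    homoth (cent A B C) (-2) X = anticomplement (k := ℝ) A B C X := by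
  rw [homoth, cent, anticomplement_apply]
  module

lemma homoth_cent_neg_half (A B C : Pt) (hsides : AvoidsSides x y z)
    (hs : x * y + y * z + z * x ≠ 0) :
    homoth (cent A B C) (-(1 / 2)) (bary A B C x⁻¹ y⁻¹ z⁻¹) = isotomcomplement A B C x y z := by
  rw [← isotomicConjugate_eq_bary A B C hsides, homoth, cent, isotomcomplement, bary,
    isotomcomplement_coords_sum]
  set s := x * y + y * z + z * x with hsdef
  match_scalars <;> field_simp <;> rw [hsdef] <;> ring

lemma cevianDilation_circumcenter {T T' : Pt →ᵃ[ℝ] Pt} (hABC : AffineIndependent ℝ ![A, B, C])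
    (hT : IsCevianMap T A B C x y z) (hT' : IsCevianMap T' A B C x⁻¹ y⁻¹ z⁻¹)
    (hsides : AvoidsSides x y z) (hs : x * y + y * z + z * x ≠ 0)
    (hOA : Par (midpoint ℝ B C - O) (T A - isotomcomplement A B C x y z))
    (hOB : Par (midpoint ℝ C A - O) (T B - isotomcomplement A B C x y z)) :
    cevianDilation T T' A B C O = isotomcomplement A B C x y z := by
  have hdir := linearIndependent_trace_sub_isotomcomplement hABC hsides hs
  rw [← hT.map_fst, ← hT.map_snd] at hdir
  exact cevianDilation_eq_isotomcomplement hABC (affineSpan_triple_eq_top (by simp) hABC) hT hT'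
    hsides hs (hOA.exists_eq_smul_s11 (hdir.ne_zero 0)) (hOB.exists_eq_smul_s11 (hdir.ne_zero 1))

end Plane

theorem M_homothety_or_translation_circumconic_to_inconic
    (A B C P P' Q Q' D E F D₃ E₃ F₃ : Pt) (x y z : ℝ)
    (hABC : AffineIndependent ℝ ![A, B, C])
    (hsum : x + y + z = 1)
    (hPco : P = x • A + y • B + z • C)
    (hx0 : x ≠ 0) (hy0 : y ≠ 0) (hz0 : z ≠ 0)
    (hx1 : x ≠ 1) (hy1 : y ≠ 1) (hz1 : z ≠ 1)
    (hst : x * y + y * z + z * x ≠ 0)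
    (hP' : P' = (y * z / (x * y + y * z + z * x)) • A
        + (x * z / (x * y + y * z + z * x)) • B
        + (x * y / (x * y + y * z + z * x)) • C)
    (hQ : Q = homoth (cent A B C) (-(1 / 2)) P')
    (hQ' : Q' = homoth (cent A B C) (-(1 / 2)) P)
    (hD : Collinear ℝ {A, P, D} ∧ Collinear ℝ {B, C, D})
    (hE : Collinear ℝ {B, P, E} ∧ Collinear ℝ {A, C, E})
    (hF : Collinear ℝ {C, P, F} ∧ Collinear ℝ {A, B, F})
    (hD₃ : Collinear ℝ {A, P', D₃} ∧ Collinear ℝ {B, C, D₃})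
    (hE₃ : Collinear ℝ {B, P', E₃} ∧ Collinear ℝ {A, C, E₃})
    (hF₃ : Collinear ℝ {C, P', F₃} ∧ Collinear ℝ {A, B, F₃})
    (TP : Pt ≃ᵃ[ℝ] Pt) (hTP : TP A = D ∧ TP B = E ∧ TP C = F)
    (TP' : Pt ≃ᵃ[ℝ] Pt) (hTP' : TP' A = D₃ ∧ TP' B = E₃ ∧ TP' C = F₃)
    (O H : Pt)
    (hO : Par (midpoint ℝ B C - O) (D - Q) ∧ Par (midpoint ℝ C A - O) (E - Q) ∧
          Par (midpoint ℝ A B - O) (F - Q))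
    (hH : Par (H - A) (D - Q) ∧ Par (H - B) (E - Q) ∧ Par (H - C) (F - Q))
    (CO : Set Pt)
    (hCO : IsConic CO) (hACO : A ∈ CO) (hBCO : B ∈ CO) (hCCO : C ∈ CO)
    (hOcen : IsCenterOf O CO)
    (hCOuniq : ∀ S : Set Pt, IsConic S → A ∈ S → B ∈ S → C ∈ S → IsCenterOf O S → S = CO)
    (I : Set Pt) (cI : Fin 6 → ℝ)
    (hIdeg : ¬(cI 0 = 0 ∧ cI 1 = 0 ∧ cI 2 = 0))
    (hIset : I = {p : Pt | qval cI p = 0})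
    (hItanD : IsTangentLineAt cI (lineThru B C) D)
    (hItanE : IsTangentLineAt cI (lineThru C A) E)
    (hItanF : IsTangentLineAt cI (lineThru A B) F)
    (hIcen : IsCenterOf Q I) :
    ((∃ (S : Pt) (r : ℝ), r ≠ 0 ∧
        ∀ X : Pt, TP (homoth (cent A B C) (-2) (TP' X)) = homoth S r X) ∨
      (∃ v : Pt, ∀ X : Pt, TP (homoth (cent A B C) (-2) (TP' X)) = X + v)) ∧
    (fun X => TP (homoth (cent A B C) (-2) (TP' X))) '' CO = I ∧
    TP (homoth (cent A B C) (-2) (TP' O)) = Q := by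
  obtain ⟨rfl, rfl, rfl⟩ := hTP
  obtain ⟨rfl, rfl, rfl⟩ := hTP'
  have hsides := avoidsSides_of_sum_eq_one hsum hx0 hy0 hz0 hx1 hy1 hz1
  obtain rfl := hPco.trans (bary_of_sum_eq_one A B C hsum).symm
  obtain rfl := hP'.trans (isotomicConjugate_eq_bary A B C hsides)
  obtain rfl := hQ.trans (homoth_cent_neg_half A B C hsides hst)
  subst hIset
  have hT : IsCevianMap (TP : Pt →ᵃ[ℝ] Pt) A B C x y z :=
    isCevianMap_of_collinear hABC (hsum ▸ one_ne_zero) hsides hD hE hF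
  have hT' : IsCevianMap (TP' : Pt →ᵃ[ℝ] Pt) A B C x⁻¹ y⁻¹ z⁻¹ :=
    isCevianMap_of_collinear hABC (hsides.inv_sum_ne_zero hst) hsides.inv hD₃ hE₃ hF₃
  have hI : IsInconic cI A B C x y z :=
    ⟨hT.map_fst ▸ hItanD, hT.map_snd ▸ hItanE, hT.map_thd ▸ hItanF⟩
  have hlin := cevianDilation_linear (affineSpan_triple_eq_top (by simp) hABC) hT hT' hsides
  have hρ := cevianRatio_ne_zero hsides
  have hMO := cevianDilation_circumcenter hABC hT hT' hsides hst hO.1 hO.2.1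
  obtain ⟨hMA, hMB, hMC⟩ := hI.qval_cevianDilation hT hT' hsides
  have hpre := hCOuniq _ (IsConic.preimage ⟨cI, hIdeg, rfl⟩ hρ hlin) hMA hMB hMC
    (IsCenterOf.preimage (hMO ▸ hIcen))
  simp only [homoth_cent_neg_two]
  exact ⟨homothety_or_translation_of_linear_eq hρ hlin,
    hpre ▸ Set.image_preimage_eq _ (surjective_of_linear_eq hρ hlin), hMO⟩
end
end
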